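/- Let τ = {nop, set, swap, free} and let (sup, sig) be a τ-region of the union U^{σ1}_φ that inhibits the event k at the state h_{0,2} (i.e., sig(k) is undefined at sup(h_{0,2})). Then for every i ∈ {0,...,m−1} there is exactly one variable X ∈ ζ_i = {X_{i,0}, X_{i,1}, X_{i,2}} with sig(X) = set. -/

import Mathlib

/-! A region that inhibits `k` at `h_{0,2}` has `sig k = free` and `sup h_{0,2} = 1`, because
`free` is the only interaction of `τ` that is not total. Hence every state incident to a
`k`-edge has support `0`, and this fixes the signatures gadget by gadget:

* `H_0` forces `sig m = swap` (`mev_eq_swap`), whence every `H_j` forces `sig v_j = swap`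
  (`v_eq_swap`).
* `F_0`, `F_1`, `F_2` together force `sig z ∈ {nop, swap}` (`z_eq_nop_or_swap`): this is the
  constraint for which they are built, and it makes two consecutive `z`-steps the identity.
* Consequently `G_j` and `D_ℓ` force `w_j` and `a_ℓ` to map `0` to `0`, so that they are
  `nop` or `free`; in particular they preserve the support wherever they occur.

In `T_{i,0}` the support is `1` after `v_{4i}` and `0` before the final `k`, while `w_i` and the
`a_ℓ` do not change it. A variable event that is not `set` also leaves the support unchanged
across its segment `s <-X-> t <-X- u` when it starts at `1`: `nop` and `swap` are injective,
and `free` is undefined at `1`. So some variable of the clause has signature `set`. If two of them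
did, then in the corresponding `T_{i,1}`, `T_{i,2}` or `T_{i,3}` both ends of the edge labelled
by some `v_j` would have support `1`, contradicting `sig v_j = swap`. -/

namespace PetriNets

/-- The eight boolean interactions. -/
inductive Interaction : Type
  | nop | inp | out | set | res | swap | used | free
  deriving DecidableEq

/-- The partial function on `{0,1}` (encoded as `Bool`) denoted by an interaction. -/
def Interaction.apply : Interaction → Bool → Option Bool
  | .nop, x => some x
  | .inp, x => if x then some false else none
  | .out, x => if x then none else some true
  | .set, _ => some true
  | .res, _ => some false
  | .swap, x => some (!x)
  | .used, x => if x then some true else none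
  | .free, x => if x then none else some false

/-- A transition system with states `S`, events `E`, a partial transition
function and an initial state. -/
structure TS (S E : Type) where
  delta : S → E → Option S
  init : S

/-- A `τ`-region of a transition system. -/
structure Region (τ : Set Interaction) {S E : Type} (A : TS S E) where
  sup : S → Bool
  sig : E → Interaction
  sig_mem : ∀ e : E, sig e ∈ τ
  consistent : ∀ (s : S) (e : E) (s' : S), A.delta s e = some s' →
    (sig e).apply (sup s) = some (sup s')

/-- The state separation property. -/
def SSP (τ : Set Interaction) {S E : Type} (A : TS S E) : Prop :=
  ∀ s s' : S, s ≠ s' → ∃ R : Region τ A, R.sup s ≠ R.sup s'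

/-- The event state separation property. -/
def ESSP (τ : Set Interaction) {S E : Type} (A : TS S E) : Prop :=
  ∀ (s : S) (e : E), A.delta s e = none →
    ∃ R : Region τ A, (R.sig e).apply (R.sup s) = none

/-- `τ`-feasibility: both the `τ`-SSP and the `τ`-ESSP. -/
def Feasible (τ : Set Interaction) {S E : Type} (A : TS S E) : Prop :=
  SSP τ A ∧ ESSP τ A

/-- A union of transition systems with pairwise disjoint states (disjointness is
enforced by the sigma type of states) over a common event alphabet. -/
def Union (ι : Type) (S : ι → Type) (E : Type) : Type := (i : ι) → TS (S i) E

/-- A `τ`-region of a union: its restriction to every component is a region. -/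
structure URegion (τ : Set Interaction) {ι : Type} {S : ι → Type} {E : Type}
    (U : Union ι S E) where
  sup : (Σ i : ι, S i) → Bool
  sig : E → Interaction
  sig_mem : ∀ e : E, sig e ∈ τ
  consistent : ∀ (i : ι) (s : S i) (e : E) (s' : S i), (U i).delta s e = some s' →
    (sig e).apply (sup ⟨i, s⟩) = some (sup ⟨i, s'⟩)

/-- SSP for unions: distinct states of a common component are separable. -/
def USSP (τ : Set Interaction) {ι : Type} {S : ι → Type} {E : Type}
    (U : Union ι S E) : Prop :=
  ∀ (i : ι) (s s' : S i), s ≠ s' → ∃ R : URegion τ U, R.sup ⟨i, s⟩ ≠ R.sup ⟨i, s'⟩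

/-- ESSP for unions: every event is inhibitable at every state where it does not occur. -/
def UESSP (τ : Set Interaction) {ι : Type} {S : ι → Type} {E : Type}
    (U : Union ι S E) : Prop :=
  ∀ (e : E) (i : ι) (s : S i), (U i).delta s e = none →
    ∃ R : URegion τ U, (R.sig e).apply (R.sup ⟨i, s⟩) = none

/-- The type of nets `{nop, set, swap, free}`, i.e. the single member of `σ1`. -/
def tau1 : Set Interaction :=
  {Interaction.nop, Interaction.set, Interaction.swap, Interaction.free}

/-- Membership in `σ2 = { {nop, set, swap, used} ∪ ω : ω ⊆ {res, free} }`. -/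
def sigma2mem (τ : Set Interaction) : Prop :=
  ∃ ω : Set Interaction, ω ⊆ {Interaction.res, Interaction.free} ∧
    τ = ({Interaction.nop, Interaction.set, Interaction.swap, Interaction.used} :
      Set Interaction) ∪ ω

/-- Direction of an edge of a chain-shaped transition system. -/
inductive Dir : Type
  | fwd | bwd | both
  deriving DecidableEq

def Dir.allowsFwd : Dir → Bool
  | .fwd => true
  | .both => true
  | .bwd => false

def Dir.allowsBwd : Dir → Bool
  | .bwd => true
  | .both => true
  | .fwd => false

def echk {E : Type} [DecidableEq E] (o : Option (E × Dir)) (e : E) (fwd : Bool) : Bool :=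
  match o with
  | none => false
  | some (e', d) => decide (e' = e) && (if fwd then d.allowsFwd else d.allowsBwd)

/-- Transition function of a chain with edge specification `spec`:
`spec[t] = (e, d)` means an edge between states `t` and `t + 1` labelled `e`
with direction `d` (forward, backward or both). -/
def chainDelta {E : Type} [DecidableEq E] (spec : List (E × Dir)) (s : ℕ) (e : E) :
    Option ℕ :=
  if echk spec[s]? e true = true then some (s + 1)
  else if s ≠ 0 ∧ echk spec[s - 1]? e false = true then some (s - 1)
  else none

/-- A chain-shaped transition system with `n + 1` states whose initial state is
the last state of the chain. -/
def chainTS {E : Type} [DecidableEq E] (n : ℕ) (spec : List (E × Dir)) :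
    TS (Fin (n + 1)) E where
  init := Fin.last n
  delta := fun s e => (chainDelta spec s.val e).bind fun r =>
    if h : r < n + 1 then some ⟨r, h⟩ else none

/-- Index set of the gadget transition systems of `U^σ_φ`. -/
inductive GIdx (m : ℕ) : Type
  | H : Fin (4 * m) → GIdx m
  | F0 : GIdx m
  | F1 : GIdx m
  | F2 : GIdx m
  | G : Fin m → GIdx m
  | D : Fin (3 * m) → GIdx m
  | T0 : Fin m → GIdx m
  | T1 : Fin m → GIdx m
  | T2 : Fin m → GIdx m
  | T3 : Fin m → GIdx m
  deriving DecidableEq, Fintype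

/-- Events of the gadgets of `U^σ_φ`; `u g` is the unique fresh event of gadget `g`
and `x vv` is the event of the variable `vv` of `φ`. -/
inductive GEvent (V : Type) (m : ℕ) : Type
  | k : GEvent V m
  | mev : GEvent V m
  | z : GEvent V m
  | q : Fin 4 → GEvent V m
  | v : Fin (4 * m) → GEvent V m
  | w : Fin m → GEvent V m
  | y : Fin m → GEvent V m
  | p : Fin (3 * m) → GEvent V m
  | a : Fin (3 * m) → GEvent V m
  | x : V → GEvent V m
  | u : GIdx m → GEvent V m
  deriving DecidableEq

/-- State spaces of the gadget transition systems. -/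
def GS (m : ℕ) : GIdx m → Type
  | .H _ => Fin 6
  | .F0 => Fin 9
  | .F1 => Fin 6
  | .F2 => Fin 10
  | .G _ => Fin 9
  | .D _ => Fin 9
  | .T0 _ => Fin 18
  | .T1 _ => Fin 5
  | .T2 _ => Fin 5
  | .T3 _ => Fin 5

def fmul4 {m : ℕ} (i : Fin m) (o : Fin 4) : Fin (4 * m) :=
  ⟨4 * i.val + o.val, by have h1 := i.isLt; have h2 := o.isLt; omega⟩

def fmul3 {m : ℕ} (i : Fin m) (o : Fin 3) : Fin (3 * m) :=
  ⟨3 * i.val + o.val, by have h1 := i.isLt; have h2 := o.isLt; omega⟩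

/-- The union `U^σ_φ` for a cubic monotone 3-CNF `φ` given by its clauses
`X : Fin m → Fin 3 → V`.  For `b = false` this is `U^{σ1}_φ`, for `b = true`
it is `U^{σ2}_φ` (in which the events `v_{4i}` and `w_i` of `T_{i,0}` are exchanged). -/
def gadget {V : Type} [DecidableEq V] (m : ℕ) (X : Fin m → Fin 3 → V) (b : Bool) :
    Union (GIdx m) (GS m) (GEvent V m) := fun idx =>
  match idx with
  | .H j => chainTS 5
      [(.k, .both), (.mev, .both), (.v j, .both), (.k, .both), (.u (.H j), .both)]
  | .F0 => chainTS 8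
      [(.k, .both), (.mev, .both), (.q 0, .both), (.k, .both), (.mev, .both),
       (.q 1, .both), (.k, .both), (.u .F0, .both)]
  | .F1 => chainTS 5
      [(.k, .both), (.q 2, .both), (.q 3, .both), (.k, .both), (.u .F1, .both)]
  | .F2 => chainTS 9
      [(.k, .both), (.q 2, .both), (.q 0, .both), (.z, .both), (.q 1, .both),
       (.z, .both), (.q 3, .both), (.k, .both), (.u .F2, .both)]
  | .G j => chainTS 8
      [(.k, .both), (.y j, .both), (.z, .fwd), (.z, .both), (.y j, .both),
       (.w j, .both), (.k, .both), (.u (.G j), .both)]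
  | .D l => chainTS 8
      [(.k, .both), (.p l, .both), (.z, .fwd), (.z, .both), (.p l, .both),
       (.a l, .both), (.k, .both), (.u (.D l), .both)]
  | .T0 i => chainTS 17
      [(.k, .both),
       ((if b then .w i else .v (fmul4 i 0)), .both),
       (.a (fmul3 i 0), .both),
       (.x (X i 0), .both),
       (.x (X i 0), .bwd),
       (.a (fmul3 i 0), .both),
       (.a (fmul3 i 1), .both),
       (.x (X i 1), .both),
       (.x (X i 1), .bwd),
       (.a (fmul3 i 1), .both),
       (.a (fmul3 i 2), .both),
       (.x (X i 2), .both),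
       (.x (X i 2), .bwd),
       (.a (fmul3 i 2), .both),
       ((if b then .v (fmul4 i 0) else .w i), .both),
       (.k, .both),
       (.u (.T0 i), .both)]
  | .T1 i => chainTS 4
      [(.x (X i 0), .both), (.v (fmul4 i 1), .both), (.x (X i 1), .both),
       (.u (.T1 i), .both)]
  | .T2 i => chainTS 4
      [(.x (X i 0), .both), (.v (fmul4 i 2), .both), (.x (X i 2), .both),
       (.u (.T2 i), .both)]
  | .T3 i => chainTS 4
      [(.x (X i 1), .both), (.v (fmul4 i 3), .both), (.x (X i 2), .both),
       (.u (.T3 i), .both)]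

/-- `φ` is a cubic monotone 3-CNF: the three variables of every clause are
pairwise distinct, and every variable occurs in exactly three clauses. -/
def Cubic {V : Type} [Fintype V] [DecidableEq V] (m : ℕ) (X : Fin m → Fin 3 → V) : Prop :=
  (∀ i : Fin m, Function.Injective (X i)) ∧
  ∀ vv : V, (Finset.univ.filter (fun pr : Fin m × Fin 3 => X pr.1 pr.2 = vv)).card = 3

/-- `M` is a one-in-three model of `φ`: it contains exactly one variable of
every clause. -/
def OneInThree {V : Type} (m : ℕ) (X : Fin m → Fin 3 → V) (M : Set V) : Prop :=
  ∀ i : Fin m, ∃! r : Fin 3, X i r ∈ M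

def hidx {m : ℕ} (hm : 0 < m) : Fin (4 * m) := ⟨0, by omega⟩

/-- The state `h_{0,2}` of the gadget `H_0`. -/
def h02 {m : ℕ} (hm : 0 < m) : Σ i : GIdx m, GS m i := ⟨GIdx.H (hidx hm), (2 : Fin 6)⟩

/-! ### Transitions of chains -/

lemma chain_fwd {E : Type} [DecidableEq E] {n : ℕ} {spec : List (E × Dir)} {e : E} (d : Dir)
    (s : ℕ) (hs : s + 1 < n + 1) (h : spec[s]? = some (e, d)) (hd : d.allowsFwd = true) :
    (chainTS n spec).delta ⟨s, by omega⟩ e = some ⟨s + 1, hs⟩ := by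
  simp [chainTS, chainDelta, echk, h, hd]
  omega

/-- The forward edge takes precedence in `chainDelta`, hence the last hypothesis. -/
lemma chain_bwd {E : Type} [DecidableEq E] {n : ℕ} {spec : List (E × Dir)} {e : E} (d : Dir)
    (s : ℕ) (hs : s + 1 < n + 1) (h : spec[s]? = some (e, d)) (hd : d.allowsBwd = true)
    (h' : echk spec[s + 1]? e true = false) :
    (chainTS n spec).delta ⟨s + 1, hs⟩ e = some ⟨s, by omega⟩ := by
  have : echk spec[s]? e false = true := by simp [echk, h, hd]
  simp [chainTS, chainDelta, h', this]
  omega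

/-! ### Interactions -/

lemma mem_tau1 {i : Interaction} (h : i ∈ tau1) :
    i = .nop ∨ i = .set ∨ i = .swap ∨ i = .free := h

lemma free_edge {i : Interaction} {x y : Bool} (hi : i = .free) (h : i.apply x = some y) :
    x = false ∧ y = false := by
  subst hi; cases x <;> simp_all [Interaction.apply]

lemma swap_edge {i : Interaction} {x y : Bool} (hi : i = .swap) (h : i.apply x = some y) :
    y = !x := by
  subst hi; cases x <;> simp_all [Interaction.apply]

lemma set_edge {i : Interaction} {x y : Bool} (hi : i = .set) (h : i.apply x = some y) :
    y = true := by
  subst hi; simp_all [Interaction.apply]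

lemma eq_swap_of_one_zero {i : Interaction} (hi : i ∈ tau1)
    (h : i.apply true = some false) : i = .swap := by
  rcases mem_tau1 hi with rfl | rfl | rfl | rfl <;> simp_all [Interaction.apply]

/-- An interaction of `τ` mapping `0` to `0` is `nop` or `free`, hence keeps the support `1`
wherever it is defined at `1`. -/
lemma keeps_one {i : Interaction} (hi : i ∈ tau1) (h : i.apply false = some false) {y : Bool}
    (hy : i.apply true = some y) : y = true := by
  rcases mem_tau1 hi with rfl | rfl | rfl | rfl <;> simp_all [Interaction.apply]

/-- A variable event that is not `set` keeps the support across its segment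
`s <-X-> t <-X- u` that starts at `1`. -/
lemma segment_keeps_one {i : Interaction} (hi : i ∈ tau1) (hset : i ≠ .set) {t u : Bool}
    (h₁ : i.apply true = some t) (h₂ : i.apply u = some t) : u = true := by
  rcases mem_tau1 hi with rfl | rfl | rfl | rfl <;> cases u <;> simp_all [Interaction.apply]

/-- The constraint that `F_1` and `F_2` impose on `z` once `q_0` and `q_1` are `swap`;
`c` is the support of `f_{1,2}`, and `s₂, !s₂, s₄, s₅, s₆` are those of `f_{2,2}, …, f_{2,6}`. -/
lemma z_constraint {z q₂ q₃ : Interaction} (hz : z ∈ tau1)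
    {c s₂ s₄ s₅ s₆ : Bool}
    (e₁ : q₂.apply false = some c) (e₁' : q₂.apply c = some false)
    (e₂ : q₃.apply c = some false) (e₂' : q₃.apply false = some c)
    (f₂ : q₂.apply false = some s₂)
    (f₄ : z.apply (!s₂) = some s₄) (f₄' : z.apply s₄ = some (!s₂))
    (f₅ : s₅ = !s₄) (f₆ : z.apply s₅ = some s₆) (f₆' : z.apply s₆ = some s₅)
    (f₇ : q₃.apply false = some s₆) :
    z = .nop ∨ z = .swap := by
  subst f₅
  obtain rfl : c = s₂ := by simpa [e₁] using f₂
  obtain rfl : c = s₆ := by simpa [e₂'] using f₇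
  rcases mem_tau1 hz with rfl | rfl | rfl | rfl <;> cases c <;> cases s₄ <;>
    simp_all [Interaction.apply]

/-- The common shape of `G_j` and `D_ℓ`: two `z`-steps compose to the identity, so the second
`y`-edge undoes the first. -/
lemma y_returns {z y : Interaction} (hz : z = .nop ∨ z = .swap)
    {s₂ s₃ s₄ s₅ : Bool}
    (e₁ : y.apply false = some s₂) (e₁' : y.apply s₂ = some false)
    (e₂ : z.apply s₂ = some s₃) (e₃ : z.apply s₃ = some s₄)
    (e₄ : y.apply s₄ = some s₅) : s₅ = false := by
  have : s₄ = s₂ := by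
    rcases hz with rfl | rfl <;> simp_all [Interaction.apply]
  subst this
  simpa [e₁'] using e₄.symm

/-! ### Signatures forced by the gadgets -/

section Signatures

variable {V : Type} [DecidableEq V] {m : ℕ} {X : Fin m → Fin 3 → V}
  (R : URegion tau1 (gadget m X false))

lemma mev_eq_swap (hk : R.sig .k = .free) (j : Fin (4 * m))
    (h2 : R.sup ⟨.H j, (2 : Fin 6)⟩ = true) : R.sig .mev = .swap := by
  have e0 := free_edge hk
    (R.consistent (.H j) (0 : Fin 6) .k (1 : Fin 6) (chain_fwd .both 0 (by decide) rfl rfl))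
  have e1 := R.consistent (.H j) (2 : Fin 6) .mev (1 : Fin 6)
    (chain_bwd .both 1 (by decide) rfl rfl rfl)
  rw [h2, e0.2] at e1
  exact eq_swap_of_one_zero (R.sig_mem _) e1

lemma v_eq_swap (hk : R.sig .k = .free) (hm : R.sig .mev = .swap) (j : Fin (4 * m)) :
    R.sig (.v j) = .swap := by
  have e0 := free_edge hk
    (R.consistent (.H j) (0 : Fin 6) .k (1 : Fin 6) (chain_fwd .both 0 (by decide) rfl rfl))
  have e1 := swap_edge hm
    (R.consistent (.H j) (1 : Fin 6) .mev (2 : Fin 6) (chain_fwd .both 1 (by decide) rfl rfl))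
  have e2 := R.consistent (.H j) (2 : Fin 6) (.v j) (3 : Fin 6)
    (chain_fwd .both 2 (by decide) rfl rfl)
  have e3 := free_edge hk
    (R.consistent (.H j) (3 : Fin 6) .k (4 : Fin 6) (chain_fwd .both 3 (by decide) rfl rfl))
  rw [e1, e0.2, e3.1] at e2
  exact eq_swap_of_one_zero (R.sig_mem _) e2

lemma q_eq_swap (hk : R.sig .k = .free) (hm : R.sig .mev = .swap) :
    R.sig (.q 0) = .swap ∧ R.sig (.q 1) = .swap := by
  have e0 := free_edge hk
    (R.consistent .F0 (0 : Fin 9) .k (1 : Fin 9) (chain_fwd .both 0 (by decide) rfl rfl))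
  have e1 := swap_edge hm
    (R.consistent .F0 (1 : Fin 9) .mev (2 : Fin 9) (chain_fwd .both 1 (by decide) rfl rfl))
  have e2 := R.consistent .F0 (2 : Fin 9) (.q 0) (3 : Fin 9)
    (chain_fwd .both 2 (by decide) rfl rfl)
  have e3 := free_edge hk
    (R.consistent .F0 (3 : Fin 9) .k (4 : Fin 9) (chain_fwd .both 3 (by decide) rfl rfl))
  have e4 := swap_edge hm
    (R.consistent .F0 (4 : Fin 9) .mev (5 : Fin 9) (chain_fwd .both 4 (by decide) rfl rfl))
  have e5 := R.consistent .F0 (5 : Fin 9) (.q 1) (6 : Fin 9)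
    (chain_fwd .both 5 (by decide) rfl rfl)
  have e6 := free_edge hk
    (R.consistent .F0 (6 : Fin 9) .k (7 : Fin 9) (chain_fwd .both 6 (by decide) rfl rfl))
  rw [e1, e0.2, e3.1] at e2
  rw [e4, e3.2, e6.1] at e5
  exact ⟨eq_swap_of_one_zero (R.sig_mem _) e2, eq_swap_of_one_zero (R.sig_mem _) e5⟩

lemma z_eq_nop_or_swap (hk : R.sig .k = .free) (hm : R.sig .mev = .swap) :
    R.sig .z = .nop ∨ R.sig .z = .swap := by
  obtain ⟨hq0, hq1⟩ := q_eq_swap R hk hm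
  have c0 := free_edge hk
    (R.consistent .F1 (0 : Fin 6) .k (1 : Fin 6) (chain_fwd .both 0 (by decide) rfl rfl))
  have c1 := R.consistent .F1 (1 : Fin 6) (.q 2) (2 : Fin 6)
    (chain_fwd .both 1 (by decide) rfl rfl)
  have c1' := R.consistent .F1 (2 : Fin 6) (.q 2) (1 : Fin 6)
    (chain_bwd .both 1 (by decide) rfl rfl rfl)
  have c2 := R.consistent .F1 (2 : Fin 6) (.q 3) (3 : Fin 6)
    (chain_fwd .both 2 (by decide) rfl rfl)
  have c2' := R.consistent .F1 (3 : Fin 6) (.q 3) (2 : Fin 6)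
    (chain_bwd .both 2 (by decide) rfl rfl rfl)
  have c3 := free_edge hk
    (R.consistent .F1 (3 : Fin 6) .k (4 : Fin 6) (chain_fwd .both 3 (by decide) rfl rfl))
  have f0 := free_edge hk
    (R.consistent .F2 (0 : Fin 10) .k (1 : Fin 10) (chain_fwd .both 0 (by decide) rfl rfl))
  have f1 := R.consistent .F2 (1 : Fin 10) (.q 2) (2 : Fin 10)
    (chain_fwd .both 1 (by decide) rfl rfl)
  have f2 := swap_edge hq0 (R.consistent .F2 (2 : Fin 10) (.q 0) (3 : Fin 10)
    (chain_fwd .both 2 (by decide) rfl rfl))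
  have f3 := R.consistent .F2 (3 : Fin 10) .z (4 : Fin 10)
    (chain_fwd .both 3 (by decide) rfl rfl)
  have f3' := R.consistent .F2 (4 : Fin 10) .z (3 : Fin 10)
    (chain_bwd .both 3 (by decide) rfl rfl rfl)
  have f4 := swap_edge hq1 (R.consistent .F2 (4 : Fin 10) (.q 1) (5 : Fin 10)
    (chain_fwd .both 4 (by decide) rfl rfl))
  have f5 := R.consistent .F2 (5 : Fin 10) .z (6 : Fin 10)
    (chain_fwd .both 5 (by decide) rfl rfl)
  have f5' := R.consistent .F2 (6 : Fin 10) .z (5 : Fin 10)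
    (chain_bwd .both 5 (by decide) rfl rfl rfl)
  have f6 := R.consistent .F2 (7 : Fin 10) (.q 3) (6 : Fin 10)
    (chain_bwd .both 6 (by decide) rfl rfl rfl)
  have f7 := free_edge hk
    (R.consistent .F2 (7 : Fin 10) .k (8 : Fin 10) (chain_fwd .both 7 (by decide) rfl rfl))
  rw [c0.2] at c1 c1'
  rw [c3.1] at c2 c2'
  rw [f0.2] at f1
  rw [f2] at f3 f3'
  rw [f7.1] at f6
  exact z_constraint (R.sig_mem _) c1 c1' c2 c2' f1 f3 f3' f4 f5 f5' f6

lemma w_zero (hk : R.sig .k = .free) (hz : R.sig .z = .nop ∨ R.sig .z = .swap) (j : Fin m) :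
    (R.sig (.w j)).apply false = some false := by
  have e0 := free_edge hk
    (R.consistent (.G j) (0 : Fin 9) .k (1 : Fin 9) (chain_fwd .both 0 (by decide) rfl rfl))
  have e1 := R.consistent (.G j) (1 : Fin 9) (.y j) (2 : Fin 9)
    (chain_fwd .both 1 (by decide) rfl rfl)
  have e1' := R.consistent (.G j) (2 : Fin 9) (.y j) (1 : Fin 9)
    (chain_bwd .both 1 (by decide) rfl rfl rfl)
  have e2 := R.consistent (.G j) (2 : Fin 9) .z (3 : Fin 9)
    (chain_fwd .fwd 2 (by decide) rfl rfl)
  have e3 := R.consistent (.G j) (3 : Fin 9) .z (4 : Fin 9)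
    (chain_fwd .both 3 (by decide) rfl rfl)
  have e4 := R.consistent (.G j) (4 : Fin 9) (.y j) (5 : Fin 9)
    (chain_fwd .both 4 (by decide) rfl rfl)
  have e5 := R.consistent (.G j) (5 : Fin 9) (.w j) (6 : Fin 9)
    (chain_fwd .both 5 (by decide) rfl rfl)
  have e6 := free_edge hk
    (R.consistent (.G j) (6 : Fin 9) .k (7 : Fin 9) (chain_fwd .both 6 (by decide) rfl rfl))
  rw [e0.2] at e1 e1'
  rwa [y_returns hz e1 e1' e2 e3 e4, e6.1] at e5

lemma a_zero (hk : R.sig .k = .free) (hz : R.sig .z = .nop ∨ R.sig .z = .swap)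
    (l : Fin (3 * m)) : (R.sig (.a l)).apply false = some false := by
  have e0 := free_edge hk
    (R.consistent (.D l) (0 : Fin 9) .k (1 : Fin 9) (chain_fwd .both 0 (by decide) rfl rfl))
  have e1 := R.consistent (.D l) (1 : Fin 9) (.p l) (2 : Fin 9)
    (chain_fwd .both 1 (by decide) rfl rfl)
  have e1' := R.consistent (.D l) (2 : Fin 9) (.p l) (1 : Fin 9)
    (chain_bwd .both 1 (by decide) rfl rfl rfl)
  have e2 := R.consistent (.D l) (2 : Fin 9) .z (3 : Fin 9)
    (chain_fwd .fwd 2 (by decide) rfl rfl)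
  have e3 := R.consistent (.D l) (3 : Fin 9) .z (4 : Fin 9)
    (chain_fwd .both 3 (by decide) rfl rfl)
  have e4 := R.consistent (.D l) (4 : Fin 9) (.p l) (5 : Fin 9)
    (chain_fwd .both 4 (by decide) rfl rfl)
  have e5 := R.consistent (.D l) (5 : Fin 9) (.a l) (6 : Fin 9)
    (chain_fwd .both 5 (by decide) rfl rfl)
  have e6 := free_edge hk
    (R.consistent (.D l) (6 : Fin 9) .k (7 : Fin 9) (chain_fwd .both 6 (by decide) rfl rfl))
  rw [e0.2] at e1 e1'
  rwa [y_returns hz e1 e1' e2 e3 e4, e6.1] at e5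

/-! ### The clause gadgets -/

/-- One variable block `<-a-> <-X-> <-X- <-a->` of `T_{i,0}` keeps the support `1` unless the
variable event is `set`. -/
lemma block_keeps_one {a x : Interaction} (ha : a ∈ tau1) (ha0 : a.apply false = some false)
    (hx : x ∈ tau1) (hset : x ≠ .set) {s₀ s₁ s₂ s₃ s₄ : Bool} (h : s₀ = true)
    (e₀ : a.apply s₀ = some s₁) (e₁ : x.apply s₁ = some s₂) (e₂ : x.apply s₃ = some s₂)
    (e₃ : a.apply s₃ = some s₄) : s₄ = true := by
  subst h
  obtain rfl := keeps_one ha ha0 e₀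
  obtain rfl := segment_keeps_one hx hset e₁ e₂
  exact keeps_one ha ha0 e₃

lemma exists_set (hk : R.sig .k = .free) (hv : ∀ j, R.sig (.v j) = .swap)
    (hw : ∀ j, (R.sig (.w j)).apply false = some false)
    (ha : ∀ l, (R.sig (.a l)).apply false = some false) (i : Fin m) :
    ∃ r : Fin 3, R.sig (.x (X i r)) = .set := by
  by_contra! hne
  have e0 := free_edge hk
    (R.consistent (.T0 i) (0 : Fin 18) .k (1 : Fin 18) (chain_fwd .both 0 (by decide) rfl rfl))
  have e1 := swap_edge (hv _) (R.consistent (.T0 i) (1 : Fin 18) (.v (fmul4 i 0)) (2 : Fin 18)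
    (chain_fwd .both 1 (by decide) rfl rfl))
  rw [e0.2] at e1
  have b0 := block_keeps_one (R.sig_mem _) (ha _) (R.sig_mem _) (hne 0) e1
    (R.consistent (.T0 i) (2 : Fin 18) (.a (fmul3 i 0)) (3 : Fin 18)
      (chain_fwd .both 2 (by decide) rfl rfl))
    (R.consistent (.T0 i) (3 : Fin 18) (.x (X i 0)) (4 : Fin 18)
      (chain_fwd .both 3 (by decide) rfl rfl))
    (R.consistent (.T0 i) (5 : Fin 18) (.x (X i 0)) (4 : Fin 18)
      (chain_bwd .bwd 4 (by decide) rfl rfl rfl))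
    (R.consistent (.T0 i) (5 : Fin 18) (.a (fmul3 i 0)) (6 : Fin 18)
      (chain_fwd .both 5 (by decide) rfl rfl))
  have b1 := block_keeps_one (R.sig_mem _) (ha _) (R.sig_mem _) (hne 1) b0
    (R.consistent (.T0 i) (6 : Fin 18) (.a (fmul3 i 1)) (7 : Fin 18)
      (chain_fwd .both 6 (by decide) rfl rfl))
    (R.consistent (.T0 i) (7 : Fin 18) (.x (X i 1)) (8 : Fin 18)
      (chain_fwd .both 7 (by decide) rfl rfl))
    (R.consistent (.T0 i) (9 : Fin 18) (.x (X i 1)) (8 : Fin 18)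
      (chain_bwd .bwd 8 (by decide) rfl rfl rfl))
    (R.consistent (.T0 i) (9 : Fin 18) (.a (fmul3 i 1)) (10 : Fin 18)
      (chain_fwd .both 9 (by decide) rfl rfl))
  have b2 := block_keeps_one (R.sig_mem _) (ha _) (R.sig_mem _) (hne 2) b1
    (R.consistent (.T0 i) (10 : Fin 18) (.a (fmul3 i 2)) (11 : Fin 18)
      (chain_fwd .both 10 (by decide) rfl rfl))
    (R.consistent (.T0 i) (11 : Fin 18) (.x (X i 2)) (12 : Fin 18)
      (chain_fwd .both 11 (by decide) rfl rfl))
    (R.consistent (.T0 i) (13 : Fin 18) (.x (X i 2)) (12 : Fin 18)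
      (chain_bwd .bwd 12 (by decide) rfl rfl rfl))
    (R.consistent (.T0 i) (13 : Fin 18) (.a (fmul3 i 2)) (14 : Fin 18)
      (chain_fwd .both 13 (by decide) rfl rfl))
  have e14 := R.consistent (.T0 i) (14 : Fin 18) (.w i) (15 : Fin 18)
    (chain_fwd .both 14 (by decide) rfl rfl)
  have e15 := free_edge hk
    (R.consistent (.T0 i) (15 : Fin 18) .k (16 : Fin 18)
      (chain_fwd .both 15 (by decide) rfl rfl))
  rw [b2, e15.1] at e14
  exact absurd (keeps_one (R.sig_mem _) (hw i) e14) (by decide)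

/-- If both outer events of `s₀ <-x-> s₁ <-v-> s₂ <-x'-> s₃` were `set`, then `s₁` and `s₂` would
both have support `1`, which `v = swap` excludes. -/
lemma not_both_set {v x x' : Interaction} (hv : v = .swap) {s₀ s₁ s₂ s₃ : Bool}
    (e₀ : x.apply s₀ = some s₁) (e₁ : v.apply s₁ = some s₂) (e₂ : x'.apply s₃ = some s₂) :
    ¬(x = .set ∧ x' = .set) := by
  rintro ⟨h, h'⟩
  have h₁ := set_edge h e₀
  have h₂ := set_edge h' e₂
  have := swap_edge hv e₁
  simp_all

lemma set_unique (hv : ∀ j, R.sig (.v j) = .swap) (i : Fin m) (r r' : Fin 3)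
    (h : R.sig (.x (X i r)) = .set) (h' : R.sig (.x (X i r')) = .set) : r = r' := by
  have t1 := not_both_set (hv _)
    (R.consistent (.T1 i) (0 : Fin 5) (.x (X i 0)) (1 : Fin 5)
      (chain_fwd .both 0 (by decide) rfl rfl))
    (R.consistent (.T1 i) (1 : Fin 5) (.v (fmul4 i 1)) (2 : Fin 5)
      (chain_fwd .both 1 (by decide) rfl rfl))
    (R.consistent (.T1 i) (3 : Fin 5) (.x (X i 1)) (2 : Fin 5)
      (chain_bwd .both 2 (by decide) rfl rfl rfl))
  have t2 := not_both_set (hv _)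
    (R.consistent (.T2 i) (0 : Fin 5) (.x (X i 0)) (1 : Fin 5)
      (chain_fwd .both 0 (by decide) rfl rfl))
    (R.consistent (.T2 i) (1 : Fin 5) (.v (fmul4 i 2)) (2 : Fin 5)
      (chain_fwd .both 1 (by decide) rfl rfl))
    (R.consistent (.T2 i) (3 : Fin 5) (.x (X i 2)) (2 : Fin 5)
      (chain_bwd .both 2 (by decide) rfl rfl rfl))
  have t3 := not_both_set (hv _)
    (R.consistent (.T3 i) (0 : Fin 5) (.x (X i 1)) (1 : Fin 5)
      (chain_fwd .both 0 (by decide) rfl rfl))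
    (R.consistent (.T3 i) (1 : Fin 5) (.v (fmul4 i 3)) (2 : Fin 5)
      (chain_fwd .both 1 (by decide) rfl rfl))
    (R.consistent (.T3 i) (3 : Fin 5) (.x (X i 2)) (2 : Fin 5)
      (chain_bwd .both 2 (by decide) rfl rfl rfl))
  fin_cases r <;> fin_cases r' <;> simp_all

end Signatures

/-- For `τ = {nop, set, swap, free}`, a `τ`-region of `U^{σ1}_φ`
inhibiting `k` at `h_{0,2}` assigns `set` to exactly one variable of every clause. -/
theorem sigma1_exactly_one_set_per_clause {V : Type} [Fintype V] [DecidableEq V]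
    (m : ℕ) (hm : 0 < m) (X : Fin m → Fin 3 → V) (hφ : Cubic m X)
    (R : URegion tau1 (gadget m X false))
    (hinh : (R.sig GEvent.k).apply (R.sup (h02 hm)) = none) :
    ∀ i : Fin m, ∃! r : Fin 3, R.sig (GEvent.x (X i r)) = Interaction.set := by
  -- `free` is the only partial interaction of `τ`, and it is undefined only at `1`.
  obtain ⟨hk, h2⟩ : R.sig .k = .free ∧ R.sup (h02 hm) = true := by
    rcases mem_tau1 (R.sig_mem .k) with h | h | h | h <;>
      cases hs : R.sup (h02 hm) <;> simp_all [Interaction.apply]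
  have hmev := mev_eq_swap R hk (hidx hm) h2
  have hz := z_eq_nop_or_swap R hk hmev
  have hv := v_eq_swap R hk hmev
  intro i
  obtain ⟨r, hr⟩ := exists_set R hk hv (w_zero R hk hz) (a_zero R hk hz) i
  exact ⟨r, hr, fun r' hr' => set_unique R hv i r' r hr' hr⟩

end PetriNets
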